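/- Let $0<a<b<\infty$ and let $\alpha$ be the unique solution of the equation $\tan(\alpha\ln(b/a))+2\alpha=0$ in the interval $(\pi/(2\ln(b/a)),\, \pi/\ln(b/a))$. Then for every real-valued function $f$ with $f^2$ integrable on $[a,b]$, one has $\int_a^b\Big(\frac{1}{x}\int_a^x f(t)\,dt\Big)^2 dx \le \frac{4}{1+4\alpha^2}\int_a^b f^2(x)\,dx$. -/

import Mathlib

open Real MeasureTheory Set

/-!
If `w > 0` solves `w'' + q w = 0`, then `h = w' / w` satisfies `h' + h² = -q`. For `F' = f`,
completing the square gives `(h F²)' = f² - q F² - (f - h F)²`, and integrating with `F a = 0` and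
`h b ≥ 0` yields `∫ q F² ≤ ∫ f²`. The extremal weight `q = (1 / 4 + α²) / x²` belongs to
`w = √x sin (α log (x / a))`, for which the equation on `α` says `w' b = 0`. As this `w` vanishes
at `a`, one uses instead `β < α` and a phase which keeps the argument of the sine at `b` fixed, and
lets `β → α`.
-/

section Riccati

lemma deriv_mul_sq_le_of_riccati {F h : ℝ → ℝ} {F' h' q x : ℝ}
    (hF : HasDerivAt F F' x) (hh : HasDerivAt h h' x) (hric : h' + h x ^ 2 ≤ -q) :
    deriv (fun y => h y * F y ^ 2) x ≤ F' ^ 2 - q * F x ^ 2 := by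
  have hderiv : deriv (fun y => h y * F y ^ 2) x = h' * F x ^ 2 + h x * (2 * F x * F') := by
    simpa using (hh.fun_mul (hF.fun_pow 2)).deriv
  calc deriv (fun y => h y * F y ^ 2) x
      = F' ^ 2 + (h' + h x ^ 2) * F x ^ 2 - (F' - h x * F x) ^ 2 := by rw [hderiv]; ring
    _ ≤ F' ^ 2 + -q * F x ^ 2 - 0 := by gcongr; exact sq_nonneg _
    _ = F' ^ 2 - q * F x ^ 2 := by ring

lemma integral_mul_sq_primitive_le_of_riccati {a b : ℝ} (hab : a ≤ b) {f h q : ℝ → ℝ}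
    (hf : MemLp f 2 (volume.restrict (Ioc a b))) (hh : AbsolutelyContinuousOnInterval h a b)
    (hq : IntervalIntegrable q volume a b)
    (hric : ∀ᵐ x, x ∈ uIcc a b → deriv h x + h x ^ 2 ≤ -q x) (hb : 0 ≤ h b) :
    ∫ x in a..b, q x * (∫ t in a..x, f t) ^ 2 ≤ ∫ x in a..b, f x ^ 2 := by
  set F : ℝ → ℝ := fun x => ∫ t in a..x, f t with hF
  have hf1 : IntervalIntegrable f volume a b :=
    (intervalIntegrable_iff_integrableOn_Ioc_of_le hab).2 (hf.integrable one_le_two)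
  have hf2 : IntervalIntegrable (fun x => f x ^ 2) volume a b :=
    (intervalIntegrable_iff_integrableOn_Ioc_of_le hab).2 hf.integrable_sq
  have hFac : AbsolutelyContinuousOnInterval F a b :=
    hf1.absolutelyContinuousOnInterval_intervalIntegral left_mem_uIcc
  have hac : AbsolutelyContinuousOnInterval (fun x => h x * F x ^ 2) a b := by
    simpa only [sq] using hh.fun_mul (hFac.fun_mul hFac)
  have hqF : IntervalIntegrable (fun x => q x * F x ^ 2) volume a b :=
    hq.mul_continuousOn (hFac.continuousOn.pow 2)
  have hderiv : ∀ᵐ x ∂volume.restrict (Icc a b),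
      deriv (fun y => h y * F y ^ 2) x ≤ f x ^ 2 - q x * F x ^ 2 := by
    rw [← uIcc_of_le hab, ae_restrict_iff' measurableSet_uIcc]
    filter_upwards [hf1.ae_hasDerivAt_integral, hh.ae_differentiableAt, hric]
      with x hFx hhx hricx hx
    exact deriv_mul_sq_le_of_riccati (hFx hx a left_mem_uIcc) (hhx hx).hasDerivAt (hricx hx)
  have hbound : h b * F b ^ 2 ≤ ∫ x in a..b, (f x ^ 2 - q x * F x ^ 2) := by
    calc h b * F b ^ 2 = h b * F b ^ 2 - h a * F a ^ 2 := by simp [hF]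
      _ = ∫ x in a..b, deriv (fun y => h y * F y ^ 2) x := hac.integral_deriv_eq_sub.symm
      _ ≤ ∫ x in a..b, (f x ^ 2 - q x * F x ^ 2) :=
        intervalIntegral.integral_mono_ae_restrict hab hac.intervalIntegrable_deriv
          (hf2.sub hqF) hderiv
  rw [intervalIntegral.integral_sub hf2 hqF] at hbound
  exact sub_nonneg.1 ((mul_nonneg hb (sq_nonneg _)).trans hbound)

end Riccati

section Euler

/-- The logarithmic derivative of `√x * sin (β * log x + γ)`, the general real solution of Euler's
equation `x ^ 2 * w'' + (1 / 4 + β ^ 2) * w = 0` up to a scalar. -/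
noncomputable def eulerLogDeriv (β γ x : ℝ) : ℝ := (1 / 2 + β * cot (β * log x + γ)) / x

lemma hasDerivAt_eulerLogDeriv {β γ x : ℝ} (hx : x ≠ 0) (hs : sin (β * log x + γ) ≠ 0) :
    HasDerivAt (eulerLogDeriv β γ)
      (-((1 / 4 + β ^ 2) / x ^ 2) - eulerLogDeriv β γ x ^ 2) x := by
  have hθ : HasDerivAt (fun y => β * log y + γ) (β * x⁻¹) x :=
    ((hasDerivAt_log hx).const_mul β).add_const γ
  unfold eulerLogDeriv
  simp only [cot_eq_cos_div_sin]
  refine ((((hθ.cos.fun_div hθ.sin hs).const_mul β).const_add (1 / 2)).fun_div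
    (hasDerivAt_id' x) hx).congr_deriv ?_
  field_simp
  ring

lemma contDiffOn_eulerLogDeriv {β γ : ℝ} {n : WithTop ℕ∞} {s : Set ℝ} (hs0 : ∀ x ∈ s, x ≠ 0)
    (hs : ∀ x ∈ s, sin (β * log x + γ) ≠ 0) : ContDiffOn ℝ n (eulerLogDeriv β γ) s := by
  unfold eulerLogDeriv
  simp only [cot_eq_cos_div_sin]
  fun_prop (disch := assumption)

variable {a b : ℝ} {f : ℝ → ℝ}

lemma mul_integral_sq_average_le_of_eulerLogDeriv_nonneg {β γ : ℝ} (ha : 0 < a) (hab : a ≤ b)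
    (hsin : ∀ x ∈ Icc a b, sin (β * log x + γ) ≠ 0) (hb : 0 ≤ eulerLogDeriv β γ b)
    (hf : MemLp f 2 (volume.restrict (Ioc a b))) :
    (1 / 4 + β ^ 2) * ∫ x in a..b, ((1 / x) * ∫ t in a..x, f t) ^ 2
      ≤ ∫ x in a..b, f x ^ 2 := by
  have hne : ∀ x ∈ Icc a b, x ≠ 0 := fun x hx => (ha.trans_le hx.1).ne'
  have hcalc : (1 / 4 + β ^ 2) * ∫ x in a..b, ((1 / x) * ∫ t in a..x, f t) ^ 2
      = ∫ x in a..b, (1 / 4 + β ^ 2) / x ^ 2 * (∫ t in a..x, f t) ^ 2 := by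
    rw [← intervalIntegral.integral_const_mul]
    exact intervalIntegral.integral_congr fun x _ => by ring
  rw [← uIcc_of_le hab] at hsin hne
  rw [hcalc]
  refine integral_mul_sq_primitive_le_of_riccati hab hf
    (contDiffOn_eulerLogDeriv hne hsin).absolutelyContinuousOnInterval
    (ContinuousOn.intervalIntegrable ?_) (ae_of_all _ fun x hx => ?_) hb
  · exact continuousOn_const.div (by fun_prop) fun x hx => pow_ne_zero 2 (hne x hx)
  · rw [(hasDerivAt_eulerLogDeriv (hne x hx) (hsin x hx)).deriv, sub_add_cancel]

lemma sin_mul_log_add_pos {β γ x : ℝ} (ha : 0 < a) (hβ : 0 ≤ β) (hγa : 0 < β * log a + γ)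
    (hγb : β * log b + γ < π) (hx : x ∈ Icc a b) : 0 < sin (β * log x + γ) := by
  have hx0 : 0 < x := ha.trans_le hx.1
  have hlow : β * log a ≤ β * log x := by gcongr; exact hx.1
  have hupp : β * log x ≤ β * log b := by gcongr; exact hx.2
  exact sin_pos_of_pos_of_lt_pi (by linarith) (by linarith)

lemma mul_integral_sq_average_le_of_cot_nonneg {α : ℝ} (ha : 0 < a) (hab : a < b) (hα : 0 < α)
    (hπ : α * log (b / a) < π) (hcot : 0 ≤ 1 / 2 + α * cot (α * log (b / a)))
    (hf : MemLp f 2 (volume.restrict (Ioc a b))) :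
    (1 / 4 + α ^ 2) * ∫ x in a..b, ((1 / x) * ∫ t in a..x, f t) ^ 2
      ≤ ∫ x in a..b, f x ^ 2 := by
  have hlog : 0 < log (b / a) := log_pos ((one_lt_div ha).2 hab)
  set φ := α * log (b / a)
  have hcont : Continuous fun β : ℝ =>
      (1 / 4 + β ^ 2) * ∫ x in a..b, ((1 / x) * ∫ t in a..x, f t) ^ 2 := by fun_prop
  refine le_of_tendsto (hcont.continuousWithinAt (s := Iio α)) ?_
  filter_upwards [Ioo_mem_nhdsLT hα] with β ⟨hβ, hβα⟩
  have hratio : 0 ≤ 1 - β / α := sub_nonneg.2 ((div_le_one hα).2 hβα.le)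
  have hcotβ : 0 ≤ 1 / 2 + β * cot φ := by
    calc 0 ≤ (1 - β / α) * (1 / 2) + β / α * (1 / 2 + α * cot φ) := by positivity
      _ = 1 / 2 + β * cot φ := by field_simp; ring
  have hphase : 0 < β * log a + (φ - β * log b) := by
    have hβφ : β * log (b / a) < φ := mul_lt_mul_of_pos_right hβα hlog
    rw [log_div (ha.trans hab).ne' ha.ne'] at hβφ
    linarith
  refine mul_integral_sq_average_le_of_eulerLogDeriv_nonneg (γ := φ - β * log b) ha hab.le
    (fun x hx => (sin_mul_log_add_pos ha hβ.le hphase (by linarith) hx).ne') ?_ hf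
  rw [eulerLogDeriv, add_sub_cancel]
  exact div_nonneg hcotβ (ha.trans hab).le

end Euler

lemma half_add_mul_cot_eq_zero_of_tan_add {α θ : ℝ} (hα : α ≠ 0) (hroot : tan θ + 2 * α = 0) :
    1 / 2 + α * cot θ = 0 := by
  rw [← tan_inv_eq_cot, eq_neg_of_add_eq_zero_left hroot]
  field_simp
  norm_num

section Norm

variable {E : Type*} [NormedAddCommGroup E]

lemma memLp_two_norm_of_integrable_norm_sq {X : Type*} [MeasurableSpace X] {μ : Measure X}
    {f : X → E} (hf : Integrable (fun x => ‖f x‖ ^ 2) μ) : MemLp (fun x => ‖f x‖) 2 μ := by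
  -- `f` itself need not be measurable, but its norm is the square root of a measurable function.
  have hmeas : AEStronglyMeasurable (fun x => ‖f x‖) μ := by
    simpa only [sqrt_sq (norm_nonneg _)] using
      continuous_sqrt.comp_aestronglyMeasurable hf.aestronglyMeasurable
  exact (memLp_two_iff_integrable_sq hmeas).2 hf

lemma integral_norm_average_sq_le [NormedSpace ℝ E] {a b : ℝ} (ha : 0 < a) (hab : a ≤ b)
    {f : ℝ → E} (hf : IntervalIntegrable (fun x => ‖f x‖) volume a b) :
    ∫ x in a..b, ‖(1 / x) • ∫ t in a..x, f t‖ ^ 2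
      ≤ ∫ x in a..b, ((1 / x) * ∫ t in a..x, ‖f t‖) ^ 2 := by
  have hcont : ContinuousOn (fun x => ((1 / x) * ∫ t in a..x, ‖f t‖) ^ 2) (uIcc a b) := by
    refine ((continuousOn_const.div continuousOn_id fun x hx => ?_).mul
      (hf.absolutelyContinuousOnInterval_intervalIntegral left_mem_uIcc).continuousOn).pow 2
    rw [uIcc_of_le hab] at hx
    exact (ha.trans_le hx.1).ne'
  simp only [intervalIntegral.integral_of_le hab]
  refine integral_mono_of_nonneg (ae_of_all _ fun x => sq_nonneg _)
    hcont.intervalIntegrable.1 (ae_restrict_of_forall_mem measurableSet_Ioc fun x hx => ?_)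
  have hx0 : 0 < x := ha.trans hx.1
  simp only [norm_smul, norm_of_nonneg (one_div_pos.2 hx0).le]
  gcongr
  exact intervalIntegral.norm_integral_le_integral_norm hx.1.le

end Norm

theorem hardy_inequality_interval_general {E : Type*} [NormedAddCommGroup E] [NormedSpace ℝ E]
    [CompleteSpace E] {a b : ℝ} (ha : 0 < a) (hab : a < b) {α : ℝ}
    (hα : α ∈ Ioo (π / (2 * log (b / a))) (π / log (b / a)))
    (hroot : tan (α * log (b / a)) + 2 * α = 0)
    {f : ℝ → E} (hf : IntegrableOn (fun x => ‖f x‖ ^ 2) (Icc a b)) :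
    ∫ x in a..b, ‖(1 / x) • ∫ t in a..x, f t‖ ^ 2
      ≤ (4 / (1 + 4 * α ^ 2)) * ∫ x in a..b, ‖f x‖ ^ 2 := by
  have hlog : 0 < log (b / a) := log_pos ((one_lt_div ha).2 hab)
  have hα0 : 0 < α := lt_trans (by positivity) hα.1
  have hfL2 : MemLp (fun x => ‖f x‖) 2 (volume.restrict (Ioc a b)) :=
    memLp_two_norm_of_integrable_norm_sq (hf.mono_set Ioc_subset_Icc_self)
  have hfint : IntervalIntegrable (fun x => ‖f x‖) volume a b :=
    (intervalIntegrable_iff_integrableOn_Ioc_of_le hab.le).2 (hfL2.integrable one_le_two)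
  have hhardy := mul_integral_sq_average_le_of_cot_nonneg ha hab hα0 ((lt_div_iff₀ hlog).1 hα.2)
    (half_add_mul_cot_eq_zero_of_tan_add hα0.ne' hroot).ge hfL2
  refine (integral_norm_average_sq_le ha hab.le hfint).trans ?_
  rw [div_mul_eq_mul_div, le_div_iff₀ (by positivity)]
  linarith

theorem hardy_inequality_interval (a b : ℝ) (ha : 0 < a) (hab : a < b)
    (α : ℝ)
    (hα : α ∈ Set.Ioo (π / (2 * Real.log (b / a))) (π / Real.log (b / a)))
    (hroot : Real.tan (α * Real.log (b / a)) + 2 * α = 0)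
    (f : ℝ → ℝ) (hf : IntegrableOn (fun x => f x ^ 2) (Set.Icc a b)) :
    ∫ x in a..b, ((1 / x) * ∫ t in a..x, f t) ^ 2
      ≤ (4 / (1 + 4 * α ^ 2)) * ∫ x in a..b, f x ^ 2 := by
  simpa only [norm_eq_abs, sq_abs, smul_eq_mul] using
    hardy_inequality_interval_general ha hab hα hroot (f := f) (by simpa using hf)
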